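/- arXiv:2509.06395 — 2 statements merged into one kernel-verified Lean document; each statement's English description precedes it below -/
import Mathlib

section
/- Variational characterization of the rate (core computation in the proof of Theorem 1): Define e(u) = (u·a_i·v_i − 1)^2 + ∑_{j≠i} (u·a_j·v_j)^2 + u^2·σ^2 and SINR = (a_i·v_i)^2 / (∑_{j≠i} (a_j·v_j)^2 + σ^2). Then inf over u ∈ ℝ and w > 0 of (w·e(u) − ln w) equals 1 − ln(1 + SINR), and the infimum is attained exactly at u* = (a_i·v_i)/J with J = ∑_{j=1}^D (a_j·v_j)^2 + σ^2 and w* = 1/e(u*). Equivalently, sup over u ∈ ℝ, w > 0 of (ln w − w·e(u) + 1) = ln(1 + SINR). -/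
/-- For fixed `s > 0`, the map `w ↦ w / s - log w` has the strict minimum `1 - log s` at `s`. -/
theorem one_sub_log_lt_div_sub_log {s w : ℝ} (hs : 0 < s) (hw : 0 < w) (hne : w ≠ s) :
    1 - Real.log s < w / s - Real.log w := by
  have h := Real.log_lt_sub_one_of_pos (div_pos hw hs) (by rwa [Ne, div_eq_one_iff_eq hs.ne'])
  rw [Real.log_div hw.ne' hs.ne'] at h
  linarith

/-- Completing the square in the mean-square error of a linear receiver with direct gain `g`
and interference-plus-noise power `N`. -/
theorem sq_mul_sub_one_add_sq_mul {g N : ℝ} (hN : 0 < N) (u : ℝ) :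
    (u * g - 1) ^ 2 + u ^ 2 * N =
      (N + g ^ 2) * (u - g / (N + g ^ 2)) ^ 2 + 1 / (1 + g ^ 2 / N) := by
  have hJ : N + g ^ 2 ≠ 0 := by positivity
  have hs : 1 / (1 + g ^ 2 / N) = N / (N + g ^ 2) := by field_simp
  rw [hs]
  field_simp
  ring

/-- Variational characterization of the rate (core computation in the proof of
Theorem 1): `inf_{u ∈ ℝ, w > 0} (w·e(u) − ln w) = 1 − ln(1 + SINR)`, attained exactly at
`u* = a_i v_i / J` and `w* = 1/e(u*)`; equivalently
`sup_{u ∈ ℝ, w > 0} (ln w − w·e(u) + 1) = ln(1 + SINR)`. -/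
theorem rate_variational_characterization
    (D : ℕ) (hD : 0 < D) (i : Fin D)
    (a : Fin D → ℝ) (ha : ∀ j, 0 ≤ a j) (v : Fin D → ℝ)
    (σ : ℝ) (hσ : 0 < σ)
    (e : ℝ → ℝ)
    (he : ∀ u, e u = (u * a i * v i - 1) ^ 2 +
      (∑ j ∈ Finset.univ.erase i, (u * a j * v j) ^ 2) + u ^ 2 * σ ^ 2)
    (J : ℝ) (hJ : J = (∑ j, (a j * v j) ^ 2) + σ ^ 2)
    (ustar : ℝ) (hustar : ustar = a i * v i / J)
    (wstar : ℝ) (hwstar : wstar = 1 / e ustar)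
    (SINR : ℝ)
    (hSINR : SINR = (a i * v i) ^ 2 /
      ((∑ j ∈ Finset.univ.erase i, (a j * v j) ^ 2) + σ ^ 2)) :
    IsLeast {x : ℝ | ∃ u w : ℝ, 0 < w ∧ x = w * e u - Real.log w}
      (1 - Real.log (1 + SINR)) ∧
    (∀ u w : ℝ, 0 < w →
      (w * e u - Real.log w = 1 - Real.log (1 + SINR) ↔ u = ustar ∧ w = wstar)) ∧
    IsGreatest {x : ℝ | ∃ u w : ℝ, 0 < w ∧ x = Real.log w - w * e u + 1}
      (Real.log (1 + SINR)) := by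
  set g := a i * v i with hg
  set N := (∑ j ∈ Finset.univ.erase i, (a j * v j) ^ 2) + σ ^ 2 with hN
  have hNpos : 0 < N := by positivity
  have hJN : J = N + g ^ 2 := by
    rw [hJ, hN, ← Finset.sum_erase_add _ _ (Finset.mem_univ i)]
    ring
  have hJpos : 0 < J := by rw [hJN]; positivity
  have hs : 0 < 1 + SINR := by rw [hSINR]; positivity
  have he' (u : ℝ) : e u = J * (u - ustar) ^ 2 + 1 / (1 + SINR) := by
    rw [hustar, hJN, hSINR, ← sq_mul_sub_one_add_sq_mul hNpos, he, hN, mul_add, Finset.mul_sum,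
      ← add_assoc, hg]
    simp only [mul_assoc, mul_pow]
  have hw' : wstar = 1 + SINR := by simp [hwstar, he']
  have hsplit (u w : ℝ) :
      w * e u - Real.log w = w * J * (u - ustar) ^ 2 + (w / (1 + SINR) - Real.log w) := by
    rw [he']
    ring
  have hmin : 0 < wstar ∧
      wstar * e ustar - Real.log wstar = 1 - Real.log (1 + SINR) := by
    refine ⟨hw' ▸ hs, ?_⟩
    rw [hsplit, hw', div_self hs.ne']
    ring
  have hle (u w : ℝ) (hw : 0 < w) : 1 - Real.log (1 + SINR) ≤ w * e u - Real.log w := by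
    have hsq : 0 ≤ w * J * (u - ustar) ^ 2 := by positivity
    rw [hsplit]
    rcases eq_or_ne w (1 + SINR) with rfl | hne
    · rw [div_self hs.ne']
      linarith
    · linarith [one_sub_log_lt_div_sub_log hs hw hne]
  refine ⟨⟨⟨ustar, wstar, hmin.1, hmin.2.symm⟩, ?_⟩, fun u w hw => ⟨fun h => ?_, ?_⟩,
    ⟨ustar, wstar, hmin.1, by linarith [hmin.2]⟩, ?_⟩
  · rintro _ ⟨u, w, hw, rfl⟩
    exact hle u w hw
  · rw [hsplit] at h
    have hsq : 0 ≤ w * J * (u - ustar) ^ 2 := by positivity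
    have hws : w = 1 + SINR := by
      by_contra hne
      linarith [one_sub_log_lt_div_sub_log hs hw hne]
    refine ⟨?_, hws.trans hw'.symm⟩
    have hzero : w * J * (u - ustar) ^ 2 = 0 := by
      rw [← hws, div_self hw.ne'] at h
      linarith
    simpa [hw.ne', hJpos.ne', sub_eq_zero] using hzero
  · rintro ⟨rfl, rfl⟩
    exact hmin.2
  · rintro _ ⟨u, w, hw, rfl⟩
    linarith [hle u w hw]
end

section
/- Theorem 1 (equivalence of the weighted sum-MSE problem (10) and the simplified sum-rate problem (6)): Let the feasible set F₁₀ consist of triples (W,U,V) ∈ ℝ^{D×M} × ℝ^{D×M} × ℝ^{D×M} with w_i^m > 0 for all i,m, ∑_{m=1}^M (v_i^m)^2 ≤ P_max for all i, and ∑_{m=1}^M w_i^m e_i^m(U,V) ≤ ∑_{m=1}^M ln w_i^m + M − R_i^min for all i, with objective F(W,U,V) = ∑_{i=1}^D ∑_{m=1}^M α_i (w_i^m e_i^m(U,V) − ln w_i^m); let the feasible set F₆ consist of P = (p_i^m) ≥ 0 with ∑_m p_i^m ≤ P_max and ∑_m R_i^m(P) ≥ R_i^min for all i, with objective G(P) =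 ∑_m ∑_i α_i R_i^m(P). Then: (a) if (W*,U*,V*) is a global minimizer of F over F₁₀, then P* defined by p_i^{m*} = (v_i^{m*})^2 is a global maximizer of G over F₆; and (b) conversely, if P* is a global maximizer of G over F₆, then setting v_i^m = √(p_i^{m*}), u_i^m = (a_{i,i}^m v_i^m)/J_i^m with J_i^m = ∑_j (a_{i,j}^m v_j^m)^2 + σ_i^2, and w_i^m = 1/e_i^m(U,V), the triple (W,U,V) is a global minimizer of F over F₁₀. -/
/-- Achievable rate of pair `i` on channel `m` under power allocation `P`:
`R_i^m(P) = ln(1 + SINR_i^m(P))`. -/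
noncomputable def rate (D M : ℕ) (a : Fin D → Fin D → Fin M → ℝ) (σ : Fin D → ℝ)
    (P : Fin D → Fin M → ℝ) (i : Fin D) (m : Fin M) : ℝ :=
  Real.log (1 + (a i i m) ^ 2 * P i m /
    ((∑ j ∈ Finset.univ.erase i, (a i j m) ^ 2 * P j m) + (σ i) ^ 2))

/-- Mean-square error of pair `i` on channel `m` for receive scalars `U` and
square-root powers `V`. -/
noncomputable def mse (D M : ℕ) (a : Fin D → Fin D → Fin M → ℝ) (σ : Fin D → ℝ)
    (U V : Fin D → Fin M → ℝ) (i : Fin D) (m : Fin M) : ℝ :=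
  (U i m * a i i m * V i m - 1) ^ 2 +
    (∑ j ∈ Finset.univ.erase i, (U i m * a i j m * V j m) ^ 2) +
    (U i m) ^ 2 * (σ i) ^ 2

/-- Feasibility for the weighted sum-MSE problem (10). -/
noncomputable def Feas10 (D M : ℕ) (a : Fin D → Fin D → Fin M → ℝ) (σ : Fin D → ℝ)
    (Pmax : ℝ) (Rmin : Fin D → ℝ) (W U V : Fin D → Fin M → ℝ) : Prop :=
  (∀ i m, 0 < W i m) ∧ (∀ i, ∑ m, (V i m) ^ 2 ≤ Pmax) ∧
    (∀ i, ∑ m, W i m * mse D M a σ U V i m ≤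
      (∑ m, Real.log (W i m)) + M - Rmin i)

/-- Objective of the weighted sum-MSE problem (10). -/
noncomputable def objF (D M : ℕ) (a : Fin D → Fin D → Fin M → ℝ) (σ : Fin D → ℝ)
    (α : Fin D → ℝ) (W U V : Fin D → Fin M → ℝ) : ℝ :=
  ∑ i, ∑ m, α i * (W i m * mse D M a σ U V i m - Real.log (W i m))

/-- Feasibility for the simplified sum-rate problem (6). -/
noncomputable def Feas6 (D M : ℕ) (a : Fin D → Fin D → Fin M → ℝ) (σ : Fin D → ℝ)
    (Pmax : ℝ) (Rmin : Fin D → ℝ) (P : Fin D → Fin M → ℝ) : Prop :=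
  (∀ i m, 0 ≤ P i m) ∧ (∀ i, ∑ m, P i m ≤ Pmax) ∧
    (∀ i, Rmin i ≤ ∑ m, rate D M a σ P i m)

/-- Objective of the simplified sum-rate problem (6). -/
noncomputable def objG (D M : ℕ) (a : Fin D → Fin D → Fin M → ℝ) (σ : Fin D → ℝ)
    (α : Fin D → ℝ) (P : Fin D → Fin M → ℝ) : ℝ :=
  ∑ m, ∑ i, α i * rate D M a σ P i m

section Scalar

/-- The quadratic error `(u s - 1)² + u² N` is at least its minimum `N / (N + s²)`. -/
theorem div_le_quadratic_error {N : ℝ} (hN : 0 < N) (u s : ℝ) :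
    N / (N + s ^ 2) ≤ (u * s - 1) ^ 2 + u ^ 2 * N := by
  have hJ : 0 < N + s ^ 2 := by positivity
  rw [div_le_iff₀ hJ]
  nlinarith [sq_nonneg (u * (N + s ^ 2) - s)]

/-- The minimum of the quadratic error is attained at `u = s / (N + s²)`. -/
theorem quadratic_error_of_eq_div {N : ℝ} (hN : 0 < N) {u s : ℝ} (hu : u = s / (N + s ^ 2)) :
    (u * s - 1) ^ 2 + u ^ 2 * N = N / (N + s ^ 2) := by
  have hJ : N + s ^ 2 ≠ 0 := by positivity
  subst hu
  field_simp
  ring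

/-- Weighting by `w` and subtracting `log w` costs at least `1 + log e`. -/
theorem one_add_log_le_mul_sub_log {w e : ℝ} (hw : 0 < w) (he : 0 < e) :
    1 + Real.log e ≤ w * e - Real.log w := by
  have h := Real.log_le_sub_one_of_pos (mul_pos hw he)
  rw [Real.log_mul hw.ne' he.ne'] at h
  linarith

end Scalar

section Link

variable {D M : ℕ} {a : Fin D → Fin D → Fin M → ℝ} {σ : Fin D → ℝ}

/-- Interference plus noise at receiver `i` on channel `m`. -/
noncomputable def interference (a : Fin D → Fin D → Fin M → ℝ) (σ : Fin D → ℝ)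
    (V : Fin D → Fin M → ℝ) (i : Fin D) (m : Fin M) : ℝ :=
  (∑ j ∈ Finset.univ.erase i, (a i j m * V j m) ^ 2) + (σ i) ^ 2

theorem interference_pos (hσ : ∀ i, 0 < σ i) (V : Fin D → Fin M → ℝ) (i : Fin D) (m : Fin M) :
    0 < interference a σ V i m :=
  add_pos_of_nonneg_of_pos (Finset.sum_nonneg fun _ _ => sq_nonneg _) (pow_pos (hσ i) 2)

theorem sum_add_sq_eq_interference (V : Fin D → Fin M → ℝ) (i : Fin D) (m : Fin M) :
    (∑ j, (a i j m * V j m) ^ 2) + (σ i) ^ 2 =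
      interference a σ V i m + (a i i m * V i m) ^ 2 := by
  rw [interference, ← Finset.sum_erase_add _ _ (Finset.mem_univ i)]
  ring

theorem mse_eq_quadratic_error (U V : Fin D → Fin M → ℝ) (i : Fin D) (m : Fin M) :
    mse D M a σ U V i m =
      (U i m * (a i i m * V i m) - 1) ^ 2 + U i m ^ 2 * interference a σ V i m := by
  simp only [mse, interference, mul_add, Finset.mul_sum, mul_pow, mul_assoc, add_assoc]

/-- The rate is minus the logarithm of the minimum mean-square error. -/
theorem rate_sq_eq_neg_log (hσ : ∀ i, 0 < σ i) (V : Fin D → Fin M → ℝ) (i : Fin D) (m : Fin M) :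
    rate D M a σ (fun i m => V i m ^ 2) i m =
      -Real.log (interference a σ V i m / (interference a σ V i m + (a i i m * V i m) ^ 2)) := by
  have hN := interference_pos (a := a) hσ V i m
  rw [← Real.log_inv, inv_div, add_div, div_self hN.ne']
  simp only [rate, interference, mul_pow]

theorem one_sub_rate_le (hσ : ∀ i, 0 < σ i) {W : Fin D → Fin M → ℝ} (U V : Fin D → Fin M → ℝ)
    (i : Fin D) (m : Fin M) (hW : 0 < W i m) :
    1 - rate D M a σ (fun i m => V i m ^ 2) i m ≤
      W i m * mse D M a σ U V i m - Real.log (W i m) := by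
  have hN := interference_pos (a := a) hσ V i m
  have hmin := div_le_quadratic_error hN (U i m) (a i i m * V i m)
  rw [← mse_eq_quadratic_error] at hmin
  have hpos : 0 < interference a σ V i m /
      (interference a σ V i m + (a i i m * V i m) ^ 2) := by positivity
  have hlog := Real.log_le_log hpos hmin
  have hcost := one_add_log_le_mul_sub_log hW (hpos.trans_le hmin)
  rw [rate_sq_eq_neg_log hσ]
  linarith

/-- The MMSE receiver with weight `1 / mse` has a positive weight and attains the bound of
`one_sub_rate_le`. -/
theorem mmse_weight_pos_and_cost_eq (hσ : ∀ i, 0 < σ i) {W U V : Fin D → Fin M → ℝ}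
    {i : Fin D} {m : Fin M}
    (hU : U i m = a i i m * V i m / ((∑ j, (a i j m * V j m) ^ 2) + (σ i) ^ 2))
    (hW : W i m = 1 / mse D M a σ U V i m) :
    0 < W i m ∧ W i m * mse D M a σ U V i m - Real.log (W i m) =
      1 - rate D M a σ (fun i m => V i m ^ 2) i m := by
  have hN := interference_pos (a := a) hσ V i m
  rw [sum_add_sq_eq_interference] at hU
  have hmse := quadratic_error_of_eq_div hN hU
  rw [← mse_eq_quadratic_error] at hmse
  have hpos : 0 < mse D M a σ U V i m := by rw [hmse]; positivity
  refine ⟨by rw [hW]; positivity, ?_⟩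
  rw [hW, one_div_mul_cancel hpos.ne', one_div, Real.log_inv, rate_sq_eq_neg_log hσ, hmse]

end Link

section Problem

variable {D M : ℕ} {a : Fin D → Fin D → Fin M → ℝ} {σ α : Fin D → ℝ} {Pmax : ℝ}
  {Rmin : Fin D → ℝ} {W U V : Fin D → Fin M → ℝ}

theorem sum_one_sub_rate (P : Fin D → Fin M → ℝ) (i : Fin D) :
    ∑ m, (1 - rate D M a σ P i m) = M - ∑ m, rate D M a σ P i m := by
  simp

theorem sum_mul_one_sub_rate (P : Fin D → Fin M → ℝ) :
    ∑ i, ∑ m, α i * (1 - rate D M a σ P i m) =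
      (∑ i, ∑ _m : Fin M, α i) - objG D M a σ α P := by
  rw [objG, Finset.sum_comm (s := (Finset.univ : Finset (Fin M)))]
  simp only [mul_sub, mul_one, Finset.sum_sub_distrib]

theorem Feas10.feas6 (hσ : ∀ i, 0 < σ i) (h : Feas10 D M a σ Pmax Rmin W U V) :
    Feas6 D M a σ Pmax Rmin (fun i m => V i m ^ 2) := by
  obtain ⟨hW, hP, hR⟩ := h
  refine ⟨fun i m => sq_nonneg _, hP, fun i => ?_⟩
  have hsum := Finset.sum_le_sum fun m (_ : m ∈ Finset.univ) =>
    one_sub_rate_le (a := a) hσ U V i m (hW i m)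
  rw [sum_one_sub_rate, Finset.sum_sub_distrib] at hsum
  linarith [hR i]

theorem Feas10.sub_objG_le_objF (hσ : ∀ i, 0 < σ i) (hα : ∀ i, 0 < α i)
    (h : Feas10 D M a σ Pmax Rmin W U V) :
    (∑ i, ∑ _m : Fin M, α i) - objG D M a σ α (fun i m => V i m ^ 2) ≤
      objF D M a σ α W U V := by
  rw [← sum_mul_one_sub_rate]
  exact Finset.sum_le_sum fun i _ => Finset.sum_le_sum fun m _ =>
    mul_le_mul_of_nonneg_left (one_sub_rate_le hσ U V i m (h.1 i m)) (hα i).le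

theorem Feas6.feas10_mmse (hσ : ∀ i, 0 < σ i)
    (h : Feas6 D M a σ Pmax Rmin (fun i m => V i m ^ 2))
    (hU : ∀ i m, U i m = a i i m * V i m / ((∑ j, (a i j m * V j m) ^ 2) + (σ i) ^ 2))
    (hW : ∀ i m, W i m = 1 / mse D M a σ U V i m) :
    Feas10 D M a σ Pmax Rmin W U V := by
  refine ⟨fun i m => (mmse_weight_pos_and_cost_eq hσ (hU i m) (hW i m)).1, h.2.1, fun i => ?_⟩
  have hsum := Finset.sum_congr rfl fun m (_ : m ∈ Finset.univ) =>
    (mmse_weight_pos_and_cost_eq hσ (hU i m) (hW i m)).2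
  rw [sum_one_sub_rate, Finset.sum_sub_distrib] at hsum
  linarith [h.2.2 i]

theorem objF_mmse (hσ : ∀ i, 0 < σ i)
    (hU : ∀ i m, U i m = a i i m * V i m / ((∑ j, (a i j m * V j m) ^ 2) + (σ i) ^ 2))
    (hW : ∀ i m, W i m = 1 / mse D M a σ U V i m) :
    objF D M a σ α W U V =
      (∑ i, ∑ _m : Fin M, α i) - objG D M a σ α (fun i m => V i m ^ 2) := by
  rw [← sum_mul_one_sub_rate]
  exact Finset.sum_congr rfl fun i _ => Finset.sum_congr rfl fun m _ => by
    rw [(mmse_weight_pos_and_cost_eq hσ (hU i m) (hW i m)).2]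

end Problem

/-- Theorem 1: equivalence of the weighted sum-MSE problem (10) and the simplified
sum-rate problem (6): (a) the squared `V`-part of a global minimizer of (10) is a
global maximizer of (6); (b) conversely, the WMMSE variables built from a global
maximizer of (6) form a global minimizer of (10). -/
theorem wmmse_rate_equivalence
    (D M : ℕ) (hD : 0 < D) (hM : 0 < M)
    (a : Fin D → Fin D → Fin M → ℝ) (ha : ∀ i j m, 0 ≤ a i j m)
    (σ : Fin D → ℝ) (hσ : ∀ i, 0 < σ i)
    (α : Fin D → ℝ) (hα : ∀ i, 0 < α i)
    (Pmax : ℝ) (hPmax : 0 < Pmax)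
    (Rmin : Fin D → ℝ) (hRmin : ∀ i, 0 ≤ Rmin i) :
    (∀ Wstar Ustar Vstar : Fin D → Fin M → ℝ,
      Feas10 D M a σ Pmax Rmin Wstar Ustar Vstar →
      (∀ W U V, Feas10 D M a σ Pmax Rmin W U V →
        objF D M a σ α Wstar Ustar Vstar ≤ objF D M a σ α W U V) →
      (Feas6 D M a σ Pmax Rmin (fun i m => (Vstar i m) ^ 2) ∧
        ∀ P, Feas6 D M a σ Pmax Rmin P →
          objG D M a σ α P ≤ objG D M a σ α (fun i m => (Vstar i m) ^ 2))) ∧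
    (∀ Pstar : Fin D → Fin M → ℝ,
      Feas6 D M a σ Pmax Rmin Pstar →
      (∀ P, Feas6 D M a σ Pmax Rmin P →
        objG D M a σ α P ≤ objG D M a σ α Pstar) →
      ∀ W U V : Fin D → Fin M → ℝ,
        (∀ i m, V i m = Real.sqrt (Pstar i m)) →
        (∀ i m, U i m = a i i m * V i m /
          ((∑ j, (a i j m * V j m) ^ 2) + (σ i) ^ 2)) →
        (∀ i m, W i m = 1 / mse D M a σ U V i m) →
        (Feas10 D M a σ Pmax Rmin W U V ∧
          ∀ W' U' V', Feas10 D M a σ Pmax Rmin W' U' V' →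
            objF D M a σ α W U V ≤ objF D M a σ α W' U' V')) := by
  constructor
  · intro W U V hfeas hmin
    refine ⟨hfeas.feas6 hσ, fun P hP => ?_⟩
    obtain ⟨V', rfl⟩ : ∃ V' : Fin D → Fin M → ℝ, P = fun i m => V' i m ^ 2 :=
      ⟨fun i m => √(P i m), funext₂ fun i m => (Real.sq_sqrt (hP.1 i m)).symm⟩
    let U' : Fin D → Fin M → ℝ := fun i m =>
      a i i m * V' i m / ((∑ j, (a i j m * V' j m) ^ 2) + (σ i) ^ 2)
    have hle := hmin (fun i m => 1 / mse D M a σ U' V' i m) U' V'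
      (hP.feas10_mmse hσ (fun _ _ => rfl) (fun _ _ => rfl))
    rw [objF_mmse hσ (fun _ _ => rfl) (fun _ _ => rfl)] at hle
    linarith [hfeas.sub_objG_le_objF hσ hα]
  · intro P hP hmax W U V hV hU hW
    obtain rfl : P = fun i m => V i m ^ 2 :=
      funext₂ fun i m => by rw [hV, Real.sq_sqrt (hP.1 i m)]
    refine ⟨hP.feas10_mmse hσ hU hW, fun W' U' V' hfeas => ?_⟩
    rw [objF_mmse hσ hU hW]
    linarith [hfeas.sub_objG_le_objF hσ hα, hmax _ (hfeas.feas6 hσ)]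
end
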